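/- Let u be a bounded function on ℂ that is a difference of two subharmonic functions, with distributional Laplacian Δu = μ - m, where μ is a non-negative locally finite measure and m is the Lebesgue (area) measure. Then there is an absolute constant C such that for every bounded Borel set E ⊆ ℂ, μ(E) ≤ m(E_{+t}) and m(E) ≤ μ(E_{+t}), where t = C·‖u‖_∞^{1/2} and E_{+t} = {z : dist(z,E) ≤ t}. -/

import Mathlib

open MeasureTheory Metric Complex

/-- The classical Laplacian of a function `φ : ℂ → ℝ` (sum of the second
derivatives in the directions `1` and `i`). -/
noncomputable def laplacian (φ : ℂ → ℝ) (z : ℂ) : ℝ :=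
  fderiv ℝ (fun w => fderiv ℝ φ w 1) z 1 +
    fderiv ℝ (fun w => fderiv ℝ φ w Complex.I) z Complex.I

/-- A real-valued function is subharmonic on a set `G` if it is upper
semicontinuous there and satisfies the sub-mean-value inequality on every
closed disc contained in `G`. -/
def SubharmonicOn (v : ℂ → ℝ) (G : Set ℂ) : Prop :=
  UpperSemicontinuousOn v G ∧
    ∀ z ∈ G, ∀ r : ℝ, 0 < r → closedBall z r ⊆ G →
      v z ≤ (2 * Real.pi)⁻¹ *
        ∫ θ in (0 : ℝ)..(2 * Real.pi), v (z + r * Complex.exp (θ * Complex.I))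

open scoped Convolution

/-- Convolution of two real functions on the plane. -/
noncomputable def cv (f g : ℂ → ℝ) : ℂ → ℝ :=
  MeasureTheory.convolution f g (ContinuousLinearMap.lsmul ℝ ℝ) volume

lemma cv_apply (f g : ℂ → ℝ) (x : ℂ) : cv f g x = ∫ t, f t * g (x - t) := rfl

lemma smooth_dir {g : ℂ → ℝ} (hg : ContDiff ℝ (⊤ : ℕ∞) g) (v : ℂ) :
    ContDiff ℝ (⊤ : ℕ∞) (fun y => fderiv ℝ g y v) := by
  have h := hg.fderiv_right (m := (⊤ : ℕ∞)) (by norm_cast)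
  exact h.clm_apply contDiff_const

lemma cv_contDiff {f g : ℂ → ℝ} (hf : LocallyIntegrable f volume)
    (hg : ContDiff ℝ (⊤ : ℕ∞) g) (hcg : HasCompactSupport g) :
    ContDiff ℝ (⊤ : ℕ∞) (cv f g) :=
  hcg.contDiff_convolution_right _ hf hg

lemma fderiv_cv {f g : ℂ → ℝ} (hf : LocallyIntegrable f volume)
    (hg : ContDiff ℝ (⊤ : ℕ∞) g) (hcg : HasCompactSupport g) (x v : ℂ) :
    fderiv ℝ (cv f g) x v = cv f (fun y => fderiv ℝ g y v) x := by
  have h1 : ContDiff ℝ 1 g := hg.of_le (by norm_cast)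
  have h := hcg.hasFDerivAt_convolution_right (ContinuousLinearMap.lsmul ℝ ℝ) hf h1 x
  have h2 := h.fderiv
  unfold cv
  rw [h2]
  exact convolution_precompR_apply _ hf (hcg.fderiv ℝ) (h1.continuous_fderiv one_ne_zero) x v

lemma laplacian_smooth {g : ℂ → ℝ} (hg : ContDiff ℝ (⊤ : ℕ∞) g) :
    ContDiff ℝ (⊤ : ℕ∞) (laplacian g) :=
  (smooth_dir (smooth_dir hg 1) 1).add (smooth_dir (smooth_dir hg I) I)

lemma laplacian_compact {g : ℂ → ℝ} (hcg : HasCompactSupport g) :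
    HasCompactSupport (laplacian g) :=
  ((hcg.fderiv_apply (𝕜 := ℝ) 1).fderiv_apply (𝕜 := ℝ) 1).add
    ((hcg.fderiv_apply (𝕜 := ℝ) I).fderiv_apply (𝕜 := ℝ) I)

lemma laplacian_tsupport {g : ℂ → ℝ} {x : ℂ} (hx : laplacian g x ≠ 0) : x ∈ tsupport g := by
  by_contra h
  apply hx
  have key : ∀ v : ℂ, fderiv ℝ (fun w => fderiv ℝ g w v) x v = 0 := by
    intro v
    have h1 : x ∉ tsupport (fun w => fderiv ℝ (fun w => fderiv ℝ g w v) w v) := fun h' =>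
      h (tsupport_fderiv_apply_subset ℝ v (tsupport_fderiv_apply_subset ℝ v h'))
    exact image_eq_zero_of_notMem_tsupport
      (f := fun w => fderiv ℝ (fun w => fderiv ℝ g w v) w v) h1
  simp [laplacian, key]

lemma integrable_cv_integrand {f g : ℂ → ℝ} (hf : LocallyIntegrable f volume)
    (hg : Continuous g) (hcg : HasCompactSupport g) (x : ℂ) :
    Integrable (fun t => f t * g (x - t)) :=
  hcg.convolutionExists_right (ContinuousLinearMap.lsmul ℝ ℝ) hf hg x

lemma laplacian_cv {f g : ℂ → ℝ} (hf : LocallyIntegrable f volume)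
    (hg : ContDiff ℝ (⊤ : ℕ∞) g) (hcg : HasCompactSupport g) (x : ℂ) :
    laplacian (cv f g) x = cv f (laplacian g) x := by
  have key : ∀ v : ℂ, fderiv ℝ (fun w => fderiv ℝ (cv f g) w v) x v =
      cv f (fun y => fderiv ℝ (fun w => fderiv ℝ g w v) y v) x := by
    intro v
    have : (fun w => fderiv ℝ (cv f g) w v) = cv f (fun y => fderiv ℝ g y v) := by
      ext w; exact fderiv_cv hf hg hcg w v
    rw [this]
    exact fderiv_cv hf (smooth_dir hg v) (hcg.fderiv_apply (𝕜 := ℝ) v) x v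
  unfold laplacian
  rw [key, key]
  simp only [cv_apply]
  rw [← integral_add]
  · simp only [mul_add]
  · exact integrable_cv_integrand hf (smooth_dir (smooth_dir hg 1) 1).continuous
      ((hcg.fderiv_apply (𝕜 := ℝ) 1).fderiv_apply (𝕜 := ℝ) 1) x
  · exact integrable_cv_integrand hf (smooth_dir (smooth_dir hg I) I).continuous
      ((hcg.fderiv_apply (𝕜 := ℝ) I).fderiv_apply (𝕜 := ℝ) I) x

lemma integral_laplacian {g : ℂ → ℝ}
    (hg : ContDiff ℝ (⊤ : ℕ∞) g) (hcg : HasCompactSupport g) : ∫ y, laplacian g y = 0 := by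
  have hf : LocallyIntegrable (fun _ : ℂ => (1 : ℝ)) volume := locallyIntegrable_const 1
  have h := laplacian_cv hf hg hcg 0
  have h2 : cv (fun _ => 1) g = fun _ => ∫ y, g y := by
    ext x
    simp only [cv_apply, one_mul]
    exact integral_sub_left_eq_self g volume x
  rw [h2] at h
  simp only [cv_apply, one_mul] at h
  rw [integral_sub_left_eq_self (laplacian g) volume 0] at h
  rw [← h]
  simp [laplacian]

/-- Existence of the mollifiers, with the scaling of the `L¹` norm of the Laplacian. -/
lemma exists_mollifier : ∃ K : ℝ, 0 < K ∧ ∀ s : ℝ, 0 < s → ∃ g : ℂ → ℝ,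
    ContDiff ℝ (⊤ : ℕ∞) g ∧ HasCompactSupport g ∧ (∀ x, 0 ≤ g x) ∧ (∫ x, g x = 1) ∧
    tsupport g ⊆ closedBall 0 s ∧ ∫ x, |laplacian g x| ≤ K / s ^ 2 := by
  let b : ContDiffBump (0 : ℂ) := ⟨1/2, 1, by norm_num, by norm_num⟩
  let h : ℂ → ℝ := b.normed volume
  have hs : ContDiff ℝ (⊤ : ℕ∞) h := b.contDiff_normed
  have hc : HasCompactSupport h := b.hasCompactSupport_normed
  have h0 : ∀ x, 0 ≤ h x := fun x => b.nonneg_normed x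
  have h1 : ∫ x, h x = 1 := b.integral_normed
  have ht : tsupport h = closedBall 0 1 := b.tsupport_normed_eq
  refine ⟨(∫ x, |laplacian h x|) + 1, by positivity, fun s hs0 => ?_⟩
  have hne : s ≠ 0 := hs0.ne'
  have hsm : ContDiff ℝ (⊤ : ℕ∞) (fun x => (s ^ 2)⁻¹ • h (s⁻¹ • x)) := by fun_prop
  have hlap : ∀ x, laplacian (fun x => (s ^ 2)⁻¹ • h (s⁻¹ • x)) x =
      (s ^ 4)⁻¹ * laplacian h (s⁻¹ • x) := by
    intro x
    have key : ∀ v : ℂ, fderiv ℝ (fun w => fderiv ℝ (fun x => (s ^ 2)⁻¹ • h (s⁻¹ • x)) w v) x v =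
        (s ^ 4)⁻¹ * fderiv ℝ (fun w => fderiv ℝ h w v) (s⁻¹ • x) v := by
      intro v
      have e1 : (fun w => fderiv ℝ (fun x => (s ^ 2)⁻¹ • h (s⁻¹ • x)) w v) =
          fun w => (s ^ 3)⁻¹ • (fun y => fderiv ℝ h y v) (s⁻¹ • w) := by
        ext w
        have hd : DifferentiableAt ℝ (fun x => h (s⁻¹ • x)) w :=
          (ContDiff.differentiable (n := (⊤ : ℕ∞)) (by fun_prop) (by simp)) w
        rw [fderiv_fun_const_smul hd, fderiv_comp_smul]
        simp only [_root_.smul_apply, smul_eq_mul]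
        field_simp
      rw [e1]
      have hv := smooth_dir hs v
      have hd : DifferentiableAt ℝ (fun x => (fun y => fderiv ℝ h y v) (s⁻¹ • x)) x :=
        (ContDiff.differentiable (n := (⊤ : ℕ∞)) (hv.comp (contDiff_const_smul s⁻¹)) (by simp)) x
      rw [fderiv_fun_const_smul hd, fderiv_comp_smul (f := fun y => fderiv ℝ h y v)]
      simp only [_root_.smul_apply, smul_eq_mul]
      field_simp
    unfold laplacian
    rw [key, key]
    ring
  refine ⟨fun x => (s ^ 2)⁻¹ • h (s⁻¹ • x), hsm, ?_, ?_, ?_, ?_, ?_⟩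
  · exact (hc.comp_smul (inv_ne_zero hne)).smul_left (f := fun _ => (s ^ 2)⁻¹)
  · intro x
    have := h0 (s⁻¹ • x)
    simp only [smul_eq_mul]; positivity
  · rw [integral_smul, Measure.integral_comp_inv_smul_of_nonneg volume h hs0.le, h1,
      Complex.finrank_real_complex]
    simp only [smul_eq_mul]; field_simp
  · apply closure_minimal _ isClosed_closedBall
    intro x hx
    have hx' : h (s⁻¹ • x) ≠ 0 := by
      intro h'; apply hx; simp only [h', smul_zero]
    have : s⁻¹ • x ∈ tsupport h := subset_tsupport _ hx'
    rw [ht, mem_closedBall_zero_iff, norm_smul, Real.norm_of_nonneg (by positivity)] at this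
    rw [mem_closedBall_zero_iff]
    field_simp at this
    exact this
  · simp_rw [hlap, abs_mul]
    rw [integral_const_mul, Measure.integral_comp_inv_smul_of_nonneg volume
      (fun x => |laplacian h x|) hs0.le, Complex.finrank_real_complex,
      abs_of_pos (by positivity : 0 < (s ^ 4)⁻¹)]
    simp only [smul_eq_mul]
    have : (s ^ 4)⁻¹ * (s ^ 2 * ∫ x, |laplacian h x|) = (∫ x, |laplacian h x|) / s ^ 2 := by
      field_simp
    rw [this]
    gcongr
    linarith

/-- Key estimate of the Laplacian of a mollified indicator. -/
lemma abs_laplacian_cv_le {X Y Z : Set ℂ} {s : ℝ} (hX : MeasurableSet X)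
    (hY : MeasurableSet Y) (hZ : MeasurableSet Z) (hXZ : X ⊆ Z) (hZY : Z ⊆ Y)
    (hXY : ∀ x ∈ X, ∀ y, dist y x ≤ 2 * s → y ∈ Y)
    {g : ℂ → ℝ} (hg : ContDiff ℝ (⊤ : ℕ∞) g) (hcg : HasCompactSupport g)
    (hsupp : tsupport g ⊆ closedBall 0 s) (x : ℂ) :
    |laplacian (cv (Z.indicator 1) g) x| ≤
      cv ((Y \ X).indicator 1) (fun y => |laplacian g y|) x := by
  have hloc : ∀ W : Set ℂ, MeasurableSet W →
      LocallyIntegrable (W.indicator (1 : ℂ → ℝ)) volume := fun W hW =>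
    (locallyIntegrable_const (1 : ℝ)).indicator hW
  have hLs := laplacian_smooth hg
  have hLc := laplacian_compact hcg
  rw [laplacian_cv (hloc Z hZ) hg hcg]
  have hdist : ∀ t, laplacian g (x - t) ≠ 0 → dist x t ≤ s := by
    intro t ht
    have := hsupp (laplacian_tsupport ht)
    rwa [mem_closedBall_zero_iff, ← dist_eq_norm] at this
  have hint : Integrable (fun t => (Y \ X).indicator 1 t * |laplacian g (x - t)|) :=
    integrable_cv_integrand (g := fun y => |laplacian g y|) (hloc _ (hY.diff hX))
      hLs.continuous.abs (hLc.comp_left abs_zero) x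
  by_cases hm : ∃ p ∈ X, dist x p ≤ s
  · obtain ⟨p, hp, hxp⟩ := hm
    have hin : ∀ t, laplacian g (x - t) ≠ 0 → t ∈ Y := by
      intro t ht
      apply hXY p hp
      have := hdist t ht
      linarith [dist_triangle_left t p x]
    have h0 : ∫ t, laplacian g (x - t) = 0 := by
      rw [integral_sub_left_eq_self (laplacian g) volume x]
      exact integral_laplacian hg hcg
    have e : cv (Z.indicator 1) (laplacian g) x =
        ∫ t, (Z.indicator 1 t * laplacian g (x - t) - laplacian g (x - t)) := by
      rw [integral_sub, h0, sub_zero, cv_apply]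
      · exact integrable_cv_integrand (hloc Z hZ) hLs.continuous hLc x
      · exact (hLs.continuous.integrable_of_hasCompactSupport hLc).comp_sub_left x
    rw [e, cv_apply, ← Real.norm_eq_abs]
    refine norm_integral_le_of_norm_le hint (Filter.Eventually.of_forall fun t => ?_)
    by_cases ht : laplacian g (x - t) = 0
    · simp [ht]
    have hY' := hin t ht
    by_cases htZ : t ∈ Z
    · simp only [htZ, Set.indicator_of_mem, Pi.one_apply, one_mul, sub_self, norm_zero]
      exact mul_nonneg (Set.indicator_nonneg (fun _ _ => zero_le_one) _) (abs_nonneg _)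
    · have : t ∈ Y \ X := ⟨hY', fun h => htZ (hXZ h)⟩
      simp [htZ, this]
  · push Not at hm
    rw [cv_apply, cv_apply, ← Real.norm_eq_abs]
    refine norm_integral_le_of_norm_le hint (Filter.Eventually.of_forall fun t => ?_)
    by_cases ht : laplacian g (x - t) = 0
    · simp [ht]
    by_cases htZ : t ∈ Z
    · have : t ∈ Y \ X := ⟨hZY htZ, fun h => absurd (hdist t ht) (not_le.mpr (hm t h))⟩
      simp [htZ, this]
    · simp only [htZ, not_false_eq_true, Set.indicator_of_notMem, zero_mul, norm_zero]
      exact mul_nonneg (Set.indicator_nonneg (fun _ _ => zero_le_one) _) (abs_nonneg _)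

lemma abs_integral_le {u : ℂ → ℝ} {M : ℝ} (hu : ∀ z, |u z| ≤ M)
    {X Y Z : Set ℂ} {s : ℝ} (hX : MeasurableSet X)
    (hY : MeasurableSet Y) (hZ : MeasurableSet Z) (hXZ : X ⊆ Z) (hZY : Z ⊆ Y)
    (hXY : ∀ x ∈ X, ∀ y, dist y x ≤ 2 * s → y ∈ Y) (hYf : volume Y ≠ ⊤)
    {g : ℂ → ℝ} (hg : ContDiff ℝ (⊤ : ℕ∞) g) (hcg : HasCompactSupport g)
    (hsupp : tsupport g ⊆ closedBall 0 s) :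
    |∫ z, u z * laplacian (cv (Z.indicator 1) g) z| ≤
      M * (volume.real (Y \ X) * ∫ y, |laplacian g y|) := by
  have hM : 0 ≤ M := (abs_nonneg _).trans (hu 0)
  have hDf : volume (Y \ X) ≠ ⊤ := measure_ne_top_of_subset Set.sdiff_subset hYf
  have hD : MeasurableSet (Y \ X) := hY.diff hX
  have hi1 : Integrable ((Y \ X).indicator (1 : ℂ → ℝ)) volume :=
    (integrable_indicator_iff hD).2 (integrableOn_const hDf)
  have hi2 : Integrable (fun y => |laplacian g y|) volume :=
    ((laplacian_smooth hg).continuous.integrable_of_hasCompactSupport (laplacian_compact hcg)).abs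
  have hi : Integrable (cv ((Y \ X).indicator 1) (fun y => |laplacian g y|)) volume :=
    hi1.integrable_convolution _ hi2
  have hval : ∫ x, cv ((Y \ X).indicator 1) (fun y => |laplacian g y|) x =
      volume.real (Y \ X) * ∫ y, |laplacian g y| := by
    have := integral_convolution (ContinuousLinearMap.lsmul ℝ ℝ) hi1 hi2
    rw [integral_indicator_one hD] at this
    exact this
  rw [← hval, ← integral_const_mul, ← Real.norm_eq_abs]
  refine norm_integral_le_of_norm_le (hi.const_mul M) (Filter.Eventually.of_forall fun z => ?_)
  rw [Real.norm_eq_abs, abs_mul]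
  exact mul_le_mul (hu z) (abs_laplacian_cv_le hX hY hZ hXZ hZY hXY hg hcg hsupp z)
    (abs_nonneg _) hM

lemma key_transport {K s : ℝ} (hs : 0 < s) {g : ℂ → ℝ} (hg : ContDiff ℝ (⊤ : ℕ∞) g)
    (hcg : HasCompactSupport g) (hg0 : ∀ x, 0 ≤ g x) (hg1 : ∫ x, g x = 1)
    (hsupp : tsupport g ⊆ closedBall 0 s) (hK : ∫ x, |laplacian g x| ≤ K / s ^ 2)
    {u : ℂ → ℝ} {μ : Measure ℂ} [IsLocallyFiniteMeasure μ] {M : ℝ} (hu : ∀ z, |u z| ≤ M)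
    (hKM : K * M ≤ s ^ 2)
    (hdist : ∀ φ : ℂ → ℝ, ContDiff ℝ (⊤ : ℕ∞) φ → HasCompactSupport φ →
          ∫ z, u z * laplacian φ z = (∫ z, φ z ∂μ) - ∫ z, φ z)
    {E : Set ℂ} (hE : MeasurableSet E) (hEb : Bornology.IsBounded E) :
    μ E ≤ volume (cthickening (4 * s) E) ∧ volume E ≤ μ (cthickening (4 * s) E) := by
  have hM : 0 ≤ M := (abs_nonneg _).trans (hu 0)
  set Z := cthickening (2 * s) E with hZdef
  set Y := cthickening (4 * s) E with hYdef
  have hZm : MeasurableSet Z := isClosed_cthickening.measurableSet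
  have hYm : MeasurableSet Y := isClosed_cthickening.measurableSet
  have hYc : IsCompact Y := isCompact_of_isClosed_isBounded isClosed_cthickening hEb.cthickening
  have hZc : IsCompact Z := isCompact_of_isClosed_isBounded isClosed_cthickening hEb.cthickening
  have hEZ : E ⊆ Z := self_subset_cthickening E
  have hZY : Z ⊆ Y := cthickening_mono (by linarith) E
  have hZY2 : ∀ x ∈ Z, ∀ y, dist y x ≤ 2 * s → y ∈ Y := by
    intro x hx y hy
    have h1 := mem_cthickening_of_dist_le y x (2 * s) Z hx hy
    have h2 := cthickening_cthickening_subset (by linarith) (by linarith) E h1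
    rwa [show 2 * s + 2 * s = 4 * s by ring] at h2
  have hEZ2 : ∀ x ∈ E, ∀ y, dist y x ≤ 2 * s → y ∈ Z := fun x hx y hy =>
    mem_cthickening_of_dist_le y x (2 * s) E hx hy
  have hYf : volume Y ≠ ⊤ := hYc.measure_lt_top.ne
  have hZf : volume Z ≠ ⊤ := hZc.measure_lt_top.ne
  have hYfμ : μ Y ≠ ⊤ := hYc.measure_lt_top.ne
  have hEf : volume E ≠ ⊤ := measure_ne_top_of_subset hEZ hZf
  have hEfμ : μ E ≠ ⊤ := measure_ne_top_of_subset (hEZ.trans hZY) hYfμ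
  have hcoef : M * (∫ x, |laplacian g x|) ≤ 1 := by
    calc M * (∫ x, |laplacian g x|) ≤ M * (K / s ^ 2) := by gcongr
      _ = (K * M) / s ^ 2 := by ring
      _ ≤ 1 := by rw [div_le_one (by positivity)]; exact hKM
  have hi1 : Integrable (Z.indicator (1 : ℂ → ℝ)) volume :=
    (integrable_indicator_iff hZm).2 (integrableOn_const hZf)
  have hi2 : Integrable g volume := hg.continuous.integrable_of_hasCompactSupport hcg
  set φ := cv (Z.indicator 1) g with hφ
  have hφs : ContDiff ℝ (⊤ : ℕ∞) φ := cv_contDiff hi1.locallyIntegrable hg hcg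
  have hnear : ∀ x t, g (x - t) ≠ 0 → dist x t ≤ s := by
    intro x t ht
    have := hsupp (subset_tsupport _ ht)
    rwa [mem_closedBall_zero_iff, ← dist_eq_norm] at this
  have hφ0 : ∀ x, 0 ≤ φ x := fun x => integral_nonneg fun t =>
    mul_nonneg (Set.indicator_nonneg (fun _ _ => zero_le_one) _) (hg0 _)
  have hφ1 : ∀ x, φ x ≤ 1 := by
    intro x
    rw [← hg1, ← integral_sub_left_eq_self g volume x, hφ, cv_apply]
    refine integral_mono (integrable_cv_integrand hi1.locallyIntegrable hg.continuous hcg x)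
      (hi2.comp_sub_left x) fun t => ?_
    exact mul_le_of_le_one_left (hg0 _) (Set.indicator_le_self' (fun _ _ => zero_le_one) t)
  have hφE : ∀ x ∈ E, φ x = 1 := by
    intro x hx
    rw [← hg1, ← integral_sub_left_eq_self g volume x, hφ, cv_apply]
    congr 1
    ext t
    by_cases ht : g (x - t) = 0
    · simp [ht]
    · have : t ∈ Z := hEZ2 x hx t (by rw [dist_comm]; linarith [hnear x t ht])
      simp [this]
  have hφY : ∀ x, x ∉ Y → φ x = 0 := by
    intro x hx
    rw [hφ, cv_apply]
    refine integral_eq_zero_of_ae (Filter.Eventually.of_forall fun t => ?_)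
    by_cases ht : g (x - t) = 0
    · simp [ht]
    · have : t ∉ Z := fun h => hx (hZY2 t h x (by linarith [hnear x t ht]))
      simp [this]
  have hφc : HasCompactSupport φ := HasCompactSupport.intro hYc hφY
  have hφm : ∫ z, φ z = volume.real Z := by
    have := integral_convolution (ContinuousLinearMap.lsmul ℝ ℝ) hi1 hi2
    rw [integral_indicator_one hZm, hg1] at this
    simp only [ContinuousLinearMap.lsmul_apply, smul_eq_mul, mul_one] at this
    exact this
  have hφi : Integrable φ μ := hφs.continuous.integrable_of_hasCompactSupport hφc
  have hlow : μ.real E ≤ ∫ z, φ z ∂μ := by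
    rw [← integral_indicator_one hE]
    refine integral_mono ((integrable_indicator_iff hE).2 (integrableOn_const hEfμ)) hφi
      fun z => ?_
    by_cases hz : z ∈ E
    · simp [hz, hφE z hz]
    · simpa [hz] using hφ0 z
  have hup : ∫ z, φ z ∂μ ≤ μ.real Y := by
    rw [← integral_indicator_one hYm]
    refine integral_mono hφi ((integrable_indicator_iff hYm).2 (integrableOn_const hYfμ))
      fun z => ?_
    by_cases hz : z ∈ Y
    · simpa [hz] using hφ1 z
    · simp [hz, hφY z hz]
  have hmain := hdist φ hφs hφc
  rw [hφm] at hmain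
  have b1 := abs_integral_le hu hZm hYm hZm le_rfl hZY hZY2 hYf hg hcg hsupp
  have b2 := abs_integral_le hu hE hZm hZm hEZ le_rfl hEZ2 hZf hg hcg hsupp
  rw [← hφ, hmain] at b1 b2
  have d1 : volume.real (Y \ Z) = volume.real Y - volume.real Z :=
    measureReal_sdiff hZY hZm hYf
  have d2 : volume.real (Z \ E) = volume.real Z - volume.real E :=
    measureReal_sdiff hEZ hE hZf
  have hmul : ∀ a : ℝ, 0 ≤ a → M * (a * ∫ x, |laplacian g x|) ≤ a := by
    intro a ha
    calc M * (a * ∫ x, |laplacian g x|) = a * (M * ∫ x, |laplacian g x|) := by ring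
      _ ≤ a * 1 := by gcongr
      _ = a := mul_one a
  have c1 := b1.trans (hmul _ measureReal_nonneg)
  have c2 := b2.trans (hmul _ measureReal_nonneg)
  rw [d1] at c1
  rw [d2] at c2
  have f1 := (abs_le.1 c1).2
  have f2 := (abs_le.1 c2).1
  constructor
  · rw [← ENNReal.toReal_le_toReal hEfμ hYf]
    change μ.real E ≤ volume.real Y
    linarith
  · rw [← ENNReal.toReal_le_toReal hEf hYfμ]
    change volume.real E ≤ μ.real Y
    linarith

/-- Transportation lemma: if `u` is a bounded delta-subharmonic function on `ℂ`
with distributional Laplacian `Δu = μ - m` (`μ` a non-negative locally finite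
measure, `m` Lebesgue area measure), then, with `t = C ‖u‖_∞^{1/2}` for an
absolute constant `C`, for every bounded Borel set `E ⊆ ℂ` one has
`μ(E) ≤ m(E_{+t})` and `m(E) ≤ μ(E_{+t})`. -/
theorem transport_of_bounded_delta_subharmonic :
    ∃ C : ℝ, 0 < C ∧
      ∀ (u v w : ℂ → ℝ) (μ : Measure ℂ), IsLocallyFiniteMeasure μ →
        SubharmonicOn v Set.univ → SubharmonicOn w Set.univ →
        (∀ z, u z = v z - w z) →
        ∀ M : ℝ, (∀ z, |u z| ≤ M) →
        (∀ φ : ℂ → ℝ, ContDiff ℝ (⊤ : ℕ∞) φ → HasCompactSupport φ →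
          ∫ z, u z * laplacian φ z = (∫ z, φ z ∂μ) - ∫ z, φ z) →
        ∀ E : Set ℂ, MeasurableSet E → Bornology.IsBounded E →
          μ E ≤ volume (cthickening (C * M ^ (1/2 : ℝ)) E) ∧
          volume E ≤ μ (cthickening (C * M ^ (1/2 : ℝ)) E) := by
  obtain ⟨K, hK, hmol⟩ := exists_mollifier
  refine ⟨4 * Real.sqrt K, by positivity, ?_⟩
  intro u v w μ hμ _ _ _ M hu hdist E hE hEb
  have hM : 0 ≤ M := (abs_nonneg _).trans (hu 0)
  have key : ∀ s : ℝ, 0 < s → K * M ≤ s ^ 2 →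
      μ E ≤ volume (cthickening (4 * s) E) ∧ volume E ≤ μ (cthickening (4 * s) E) := by
    intro s hs hKM
    obtain ⟨g, hg, hcg, hg0, hg1, hsupp, hKg⟩ := hmol s hs
    exact key_transport hs hg hcg hg0 hg1 hsupp hKg hu hKM hdist hE hEb
  rcases hM.eq_or_lt with h0 | hpos
  · subst h0
    rw [Real.zero_rpow (by norm_num), mul_zero, cthickening_zero]
    have hfin : ∀ ν : Measure ℂ, IsLocallyFiniteMeasure ν →
        Filter.Tendsto (fun s : ℝ => ν (cthickening (4 * s) E)) (nhdsWithin 0 (Set.Ioi 0))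
          (nhds (ν (closure E))) := by
      intro ν hν
      have h1 : Filter.Tendsto (fun r => ν (cthickening r E)) (nhds 0) (nhds (ν (closure E))) :=
        tendsto_measure_cthickening ⟨1, one_pos, (isCompact_of_isClosed_isBounded
          isClosed_cthickening hEb.cthickening).measure_lt_top.ne⟩
      have h2 : Filter.Tendsto (fun s : ℝ => 4 * s) (nhdsWithin 0 (Set.Ioi 0)) (nhds 0) := by
        have h3 : Filter.Tendsto (fun s : ℝ => 4 * s) (nhds 0) (nhds (4 * 0)) :=
          (continuous_const.mul continuous_id).tendsto 0
        rw [mul_zero] at h3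
        exact h3.mono_left nhdsWithin_le_nhds
      exact h1.comp h2
    constructor
    · refine ge_of_tendsto (hfin volume inferInstance) ?_
      filter_upwards [self_mem_nhdsWithin] with s hs
      exact (key s hs (by rw [mul_zero]; positivity)).1
    · refine ge_of_tendsto (hfin μ hμ) ?_
      filter_upwards [self_mem_nhdsWithin] with s hs
      exact (key s hs (by rw [mul_zero]; positivity)).2
  · rw [← Real.sqrt_eq_rpow, mul_assoc]
    refine key _ (by positivity) ?_
    rw [mul_pow, Real.sq_sqrt hK.le, Real.sq_sqrt hM]
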